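/- Let t = 2^i·ℓ + 1 where i ≥ 1 and ℓ ≥ 3 is odd, with ℓ dividing 2^i − 1 and ℓ ≠ 2^i − 1. If g_t(x,y) is irreducible in F_2[x,y], then g_t(x,y) is absolutely irreducible, i.e., irreducible over the algebraic closure of F_2. -/

import Mathlib

open MvPolynomial

section Bezout

variable {K : Type*} [Field K]

/-- polynomials all of whose monomials have degree `< n` -/
noncomputable def VV (K : Type*) [Field K] (n : ℕ) : Submodule K (MvPolynomial (Fin 2) K) :=
  restrictSupport K {s | s.degree < n}

/-- powers of the ideal of the origin -/
noncomputable abbrev WW (K : Type*) [Field K] (n : ℕ) : Ideal (MvPolynomial (Fin 2) K) :=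
  idealOfVars (Fin 2) K ^ n

lemma mem_VV {n : ℕ} {p : MvPolynomial (Fin 2) K} :
    p ∈ VV K n ↔ ∀ s ∈ p.support, s.degree < n := Iff.rfl

lemma mem_VV' {n : ℕ} {p : MvPolynomial (Fin 2) K} :
    p ∈ VV K n ↔ ∀ s : Fin 2 →₀ ℕ, n ≤ s.degree → coeff s p = 0 := by
  rw [mem_VV]
  constructor
  · intro h s hs
    by_contra hc
    have := h s (mem_support_iff.2 hc)
    omega
  · intro h s hs
    by_contra hc
    exact mem_support_iff.1 hs (h s (by omega))

lemma mem_WW {n : ℕ} {p : MvPolynomial (Fin 2) K} :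
    p ∈ WW K n ↔ ∀ s : Fin 2 →₀ ℕ, s.degree < n → coeff s p = 0 :=
  mem_pow_idealOfVars_iff' n p

lemma VV_mono {m n : ℕ} (h : m ≤ n) : VV K m ≤ VV K n := by
  intro p hp
  rw [mem_VV] at *
  intro s hs
  exact (hp s hs).trans_le h

lemma WW_mono {m n : ℕ} (h : m ≤ n) : WW K n ≤ WW K m := Ideal.pow_le_pow_right h

lemma VV_mul {m n j : ℕ} (hj : m + n ≤ j + 1) {p q : MvPolynomial (Fin 2) K} (hp : p ∈ VV K m)
    (hq : q ∈ VV K n) : p * q ∈ VV K j := by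
  classical
  rw [mem_VV] at *
  intro s hs
  obtain ⟨a, ha, b, hb, rfl⟩ := Finset.mem_add.1 (support_mul p q hs)
  have := hp a ha
  have := hq b hb
  rw [map_add]
  omega

lemma WW_mul {m n j : ℕ} (hj : j ≤ m + n) {p q : MvPolynomial (Fin 2) K} (hp : p ∈ WW K m)
    (hq : q ∈ WW K n) : p * q ∈ WW K j := by
  apply WW_mono hj
  rw [WW, pow_add]
  exact Ideal.mul_mem_mul hp hq

lemma homog_mem_WW {n : ℕ} {p : MvPolynomial (Fin 2) K} (h : p.IsHomogeneous n) : p ∈ WW K n := by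
  rw [mem_WW]
  intro s hs
  exact h.coeff_eq_zero (by omega)

lemma homog_mem_VV {n : ℕ} {p : MvPolynomial (Fin 2) K} (h : p.IsHomogeneous n) :
    p ∈ VV K (n + 1) := by
  rw [mem_VV']
  intro s hs
  exact h.coeff_eq_zero (by omega)

lemma homog_WW_eq_zero {n m : ℕ} {p : MvPolynomial (Fin 2) K} (h : p.IsHomogeneous n)
    (hp : p ∈ WW K m) (hm : n < m) : p = 0 := by
  rw [mem_WW] at hp
  ext s
  by_cases hs : s.degree = n
  · simpa using hp s (by omega)
  · simpa using h.coeff_eq_zero hs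

lemma homog_VV_eq_zero {n m : ℕ} {p : MvPolynomial (Fin 2) K} (h : p.IsHomogeneous n)
    (hp : p ∈ VV K m) (hm : m ≤ n) : p = 0 := by
  rw [mem_VV'] at hp
  ext s
  by_cases hs : s.degree = n
  · simpa using hp s (by omega)
  · simpa using h.coeff_eq_zero hs

/-- `T` is the lowest form of `p`, of degree `m` -/
def Low (p : MvPolynomial (Fin 2) K) (m : ℕ) (T : MvPolynomial (Fin 2) K) : Prop :=
  T.IsHomogeneous m ∧ T ≠ 0 ∧ p - T ∈ WW K (m + 1)

/-- `T` is the top form of `p`, of degree `m` -/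
def TopF (p : MvPolynomial (Fin 2) K) (m : ℕ) (T : MvPolynomial (Fin 2) K) : Prop :=
  T.IsHomogeneous m ∧ T ≠ 0 ∧ p - T ∈ VV K m

lemma Low.self {m : ℕ} {T : MvPolynomial (Fin 2) K} (h : T.IsHomogeneous m) (h0 : T ≠ 0) :
    Low T m T := ⟨h, h0, by simp⟩

lemma Low.mem {p T : MvPolynomial (Fin 2) K} {m : ℕ} (h : Low p m T) : p ∈ WW K m := by
  have := (WW K m).add_mem (WW_mono (Nat.le_succ m) h.2.2) (homog_mem_WW h.1)
  simpa using this

lemma Low.le {p T : MvPolynomial (Fin 2) K} {m n : ℕ} (h : Low p m T) (hp : p ∈ WW K n) :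
    n ≤ m := by
  by_contra hc
  have h1 : T ∈ WW K (m + 1) := by
    have := (WW K (m+1)).sub_mem (WW_mono (by omega) hp) h.2.2
    simpa using this
  exact h.2.1 (homog_WW_eq_zero h.1 h1 (by omega))

lemma Low.exists {p : MvPolynomial (Fin 2) K} (hp : p ≠ 0) : ∃ m T, Low p m T := by
  classical
  have hne : p.support.Nonempty := by simpa [Finset.nonempty_iff_ne_empty] using hp
  obtain ⟨s, hs, hmin⟩ := Finset.exists_min_image p.support (fun s => s.degree) hne
  refine ⟨s.degree, homogeneousComponent s.degree p, homogeneousComponent_isHomogeneous _ _, ?_, ?_⟩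
  · intro h
    have := congrArg (coeff s) h
    rw [coeff_homogeneousComponent] at this
    simp at this
    exact mem_support_iff.1 hs this
  · rw [mem_WW]
    intro r hr
    rw [coeff_sub, coeff_homogeneousComponent]
    split_ifs with h
    · simp
    · by_contra hc
      simp at hc
      have := hmin r (mem_support_iff.2 hc)
      omega

lemma TopF.exists {p : MvPolynomial (Fin 2) K} (hp : p ≠ 0) :
    ∃ T, TopF p p.totalDegree T := by
  classical
  have hne : p.support.Nonempty := by simpa [Finset.nonempty_iff_ne_empty] using hp
  obtain ⟨s, hs, hmin⟩ := Finset.exists_mem_eq_sup p.support hne (fun s => s.degree)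
  have hd : p.totalDegree = s.degree := by
    rw [← hmin]; rfl
  refine ⟨homogeneousComponent s.degree p, hd ▸ homogeneousComponent_isHomogeneous _ _, ?_, ?_⟩
  · intro h
    have := congrArg (coeff s) h
    rw [coeff_homogeneousComponent] at this
    simp at this
    exact mem_support_iff.1 hs this
  · rw [mem_VV']
    intro r hr
    rw [coeff_sub, coeff_homogeneousComponent]
    split_ifs with h
    · simp
    · by_contra hc
      simp at hc
      have : r.degree ≤ p.totalDegree := le_totalDegree (mem_support_iff.2 hc)
      omega

lemma Low.mul {p q T U : MvPolynomial (Fin 2) K} {m n : ℕ} (h : Low p m T) (h' : Low q n U) :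
    Low (p * q) (m + n) (T * U) := by
  refine ⟨h.1.mul h'.1, mul_ne_zero h.2.1 h'.2.1, ?_⟩
  have : p * q - T * U = (p - T) * q + T * (q - U) := by ring
  rw [this]
  exact (WW K _).add_mem (WW_mul (by omega) h.2.2 h'.mem) (WW_mul (by omega) (homog_mem_WW h.1) h'.2.2)

lemma TopF.mem {p T : MvPolynomial (Fin 2) K} {m : ℕ} (h : TopF p m T) : p ∈ VV K (m + 1) := by
  have := (VV K (m+1)).add_mem (VV_mono (Nat.le_succ m) h.2.2) (homog_mem_VV h.1)
  simpa using this

lemma TopF.mul {p q T U : MvPolynomial (Fin 2) K} {m n : ℕ} (h : TopF p m T) (h' : TopF q n U) :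
    TopF (p * q) (m + n) (T * U) := by
  refine ⟨h.1.mul h'.1, mul_ne_zero h.2.1 h'.2.1, ?_⟩
  have : p * q - T * U = (p - T) * q + T * (q - U) := by ring
  rw [this]
  exact (VV K _).add_mem (VV_mul (by omega) h.2.2 h'.mem) (VV_mul (by omega) (homog_mem_VV h.1) h'.2.2)

lemma Low.unique {p T U : MvPolynomial (Fin 2) K} {m n : ℕ} (h : Low p m T) (h' : Low p n U) :
    m = n ∧ T = U := by
  have e : m = n := le_antisymm (h'.le h.mem) (h.le h'.mem)
  subst e
  refine ⟨rfl, ?_⟩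
  have h1 : T - U ∈ WW K (m + 1) := by
    have := (WW K (m+1)).sub_mem h'.2.2 h.2.2
    simpa using this
  exact sub_eq_zero.1 (homog_WW_eq_zero (h.1.sub h'.1) h1 (by omega))

lemma Low.lt {p T : MvPolynomial (Fin 2) K} {m n : ℕ} (h : Low p m T) (hp : p ∈ VV K n) :
    m < n := by
  by_contra hc
  rw [mem_VV'] at hp
  apply h.2.1
  have h2 := mem_WW.1 h.2.2
  ext s
  by_cases hs : s.degree = m
  · have := h2 s (by omega)
    rw [coeff_sub, hp s (by omega)] at this
    simpa using this
  · simpa using h.1.coeff_eq_zero hs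

lemma local_inj {h k T U r s : MvPolynomial (Fin 2) K} {a b : ℕ} (hh : Low h a T) (hk : Low k b U)
    (hTU : IsRelPrime T U) (hr : r ∈ VV K b) (hs : s ∈ VV K a)
    (hm : r * h + s * k ∈ WW K (a + b)) : r = 0 ∧ s = 0 := by
  by_cases r0 : r = 0
  · refine ⟨r0, ?_⟩
    by_contra s0
    obtain ⟨e, B, hB⟩ := Low.exists s0
    have h1 := hB.lt hs
    rw [r0, zero_mul, zero_add] at hm
    have := (hB.mul hk).le hm
    omega
  obtain ⟨e, A, hA⟩ := Low.exists r0
  have h1 := hA.lt hr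
  exfalso
  by_cases s0 : s = 0
  · rw [s0, zero_mul, add_zero] at hm
    have := (hA.mul hh).le hm
    omega
  obtain ⟨e', B, hB⟩ := Low.exists s0
  have h2 := hB.lt hs
  have l1 := hA.mul hh
  have l2 := hB.mul hk
  rcases lt_trichotomy (e + a) (e' + b) with hlt | heq | hgt
  · have : r * h ∈ WW K (e + a + 1) := by
      have := (WW K (e+a+1)).sub_mem (WW_mono (by omega) hm) (WW_mono (by omega) l2.mem)
      simpa using this
    have := l1.le this
    omega
  · have hz : A * T + B * U ∈ WW K (e + a + 1) := by
      have e1 : A * T + B * U = (r * h + s * k) - (r * h - A * T) - (s * k - B * U) := by ring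
      rw [e1]
      refine (WW K _).sub_mem ((WW K _).sub_mem (WW_mono (by omega) hm) l1.2.2) ?_
      rw [heq]; exact l2.2.2
    have hz2 : A * T + B * U = 0 :=
      homog_WW_eq_zero (l1.1.add (heq ▸ l2.1)) hz (by omega)
    have hd : U ∣ A * T := ⟨-B, by linear_combination hz2⟩
    have hd2 : U ∣ A := hTU.symm.dvd_of_dvd_mul_right hd
    obtain ⟨c, hc⟩ := hd2
    have c0 : c ≠ 0 := by rintro rfl; exact hA.2.1 (by simpa using hc)
    have := congrArg totalDegree hc
    rw [totalDegree_mul_of_isDomain hk.2.1 c0, hA.1.totalDegree hA.2.1,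
      hk.1.totalDegree hk.2.1] at this
    omega
  · have : s * k ∈ WW K (e' + b + 1) := by
      have := (WW K (e'+b+1)).sub_mem (WW_mono (by omega) hm) (WW_mono (by omega) l1.mem)
      simpa using this
    have := l2.le this
    omega

lemma degree_fin2 (s : Fin 2 →₀ ℕ) : s.degree = s 0 + s 1 := by
  rw [Finsupp.degree_eq_sum]; simp

lemma ncard_deg_eq (n : ℕ) : {s : Fin 2 →₀ ℕ | s.degree = n}.ncard = n + 1 := by
  have : {s : Fin 2 →₀ ℕ | s.degree = n} =
      (fun i => Finsupp.equivFunOnFinite.symm ![i, n - i]) '' (Finset.range (n + 1) : Set ℕ) := by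
    ext s
    simp only [Set.mem_ofPred_eq, degree_fin2, Set.mem_image, Finset.coe_range, Set.mem_Iio]
    constructor
    · intro h
      refine ⟨s 0, by omega, ?_⟩
      ext i
      fin_cases i <;> simp
      omega
    · rintro ⟨i, hi, rfl⟩
      simp
      omega
  rw [this, Set.ncard_image_of_injective, Set.ncard_coe_finset, Finset.card_range]
  intro i j hij
  simpa using DFunLike.congr_fun hij 0

lemma finite_deg_lt (n : ℕ) : {s : Fin 2 →₀ ℕ | s.degree < n}.Finite := by
  induction n with
  | zero => simp
  | succ n ih =>
    have : {s : Fin 2 →₀ ℕ | s.degree < n + 1} = {s | s.degree < n} ∪ {s | s.degree = n} := by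
      ext s; simp; omega
    rw [this]
    refine ih.union (Set.finite_of_ncard_ne_zero ?_)
    rw [ncard_deg_eq]; omega

lemma ncard_deg_lt (n : ℕ) : 2 * {s : Fin 2 →₀ ℕ | s.degree < n}.ncard = n * (n + 1) := by
  induction n with
  | zero => simp
  | succ n ih =>
    have : {s : Fin 2 →₀ ℕ | s.degree < n + 1} = {s | s.degree < n} ∪ {s | s.degree = n} := by
      ext s; simp; omega
    rw [this, Set.ncard_union_eq ?_ (finite_deg_lt n) (Set.finite_of_ncard_ne_zero ?_),
      ncard_deg_eq, mul_add, ih]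
    · ring
    · rw [Set.disjoint_left]
      intro s hs hs'
      simp at hs hs'
      omega
    · rw [ncard_deg_eq]; omega

instance (n : ℕ) : FiniteDimensional K (VV K n) := by
  have := (finite_deg_lt n).to_subtype
  exact Module.Finite.of_basis (basisRestrictSupport K {s : Fin 2 →₀ ℕ | s.degree < n})

lemma finrank_VV (n : ℕ) : 2 * Module.finrank K (VV K n) = n * (n + 1) := by
  rw [← ncard_deg_lt, VV, Module.finrank_eq_nat_card_basis (basisRestrictSupport K {s : Fin 2 →₀ ℕ | s.degree < n})]
  rfl

lemma homog_eq (n : ℕ) : homogeneousSubmodule (Fin 2) K n = restrictSupport K {s | s.degree = n} :=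
  homogeneousSubmodule_eq_finsupp_supported _ _ n

lemma finrank_homog (n : ℕ) : Module.finrank K (homogeneousSubmodule (Fin 2) K n) = n + 1 := by
  rw [homog_eq, Module.finrank_eq_nat_card_basis (basisRestrictSupport K {s : Fin 2 →₀ ℕ | s.degree = n})]
  exact ncard_deg_eq n

instance (n : ℕ) : FiniteDimensional K (homogeneousSubmodule (Fin 2) K n) := by
  apply Module.finite_of_finrank_pos
  rw [finrank_homog]; omega

end Bezout


section Bezout2

variable {K : Type*} [Field K]

/-- the linear map `(r, s) ↦ r * h + s * k` -/
noncomputable def comb (h k : MvPolynomial (Fin 2) K) (A B : Submodule K (MvPolynomial (Fin 2) K)) :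
    (A × B) →ₗ[K] MvPolynomial (Fin 2) K :=
  LinearMap.coprod ((LinearMap.mulRight K h).comp A.subtype) ((LinearMap.mulRight K k).comp B.subtype)

lemma comb_apply (h k : MvPolynomial (Fin 2) K) (A B : Submodule K (MvPolynomial (Fin 2) K))
    (x : A × B) : comb h k A B x = x.1 * h + x.2 * k := by
  simp [comb]

lemma WW_le {h k T U : MvPolynomial (Fin 2) K} {a b : ℕ} (hh : Low h (a+1) T) (hk : Low k (b+1) U)
    (hTU : IsRelPrime T U) :
    WW K (a + b + 1) ≤ Ideal.span {h, k} ⊔ WW K (a + b + 2) := by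
  have surj : ∀ X : MvPolynomial (Fin 2) K, X.IsHomogeneous (a + b + 1) →
      ∃ r s : MvPolynomial (Fin 2) K, r.IsHomogeneous b ∧ s.IsHomogeneous a ∧ X = r * T + s * U := by
    let A := homogeneousSubmodule (Fin 2) K b
    let B := homogeneousSubmodule (Fin 2) K a
    let L := comb T U A B
    have hinj : Function.Injective L := by
      rw [← LinearMap.ker_eq_bot, LinearMap.ker_eq_bot']
      rintro ⟨r, s⟩ hx
      rw [comb_apply] at hx
      have := local_inj (Low.self hh.1 hh.2.1) (Low.self hk.1 hk.2.1) hTU (r := r) (s := s)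
        (homog_mem_VV (show (r : MvPolynomial (Fin 2) K).IsHomogeneous b from r.2))
        (homog_mem_VV (show (s : MvPolynomial (Fin 2) K).IsHomogeneous a from s.2)) (by rw [hx]; exact zero_mem _)
      ext1
      · exact Subtype.ext this.1
      · exact Subtype.ext this.2
    have hle : LinearMap.range L ≤ homogeneousSubmodule (Fin 2) K (a + b + 1) := by
      rintro _ ⟨⟨r, s⟩, rfl⟩
      rw [comb_apply]
      have h1 := (show (r : MvPolynomial (Fin 2) K).IsHomogeneous b from r.2).mul hh.1
      have h2 := (show (s : MvPolynomial (Fin 2) K).IsHomogeneous a from s.2).mul hk.1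
      have e1 : b + (a + 1) = a + b + 1 := by omega
      have e2 : a + (b + 1) = a + b + 1 := by omega
      rw [e1] at h1
      rw [e2] at h2
      exact h1.add h2
    have heq : LinearMap.range L = homogeneousSubmodule (Fin 2) K (a + b + 1) := by
      apply Submodule.eq_of_le_of_finrank_eq hle
      rw [LinearMap.finrank_range_of_inj hinj, Module.finrank_prod, finrank_homog, finrank_homog,
        finrank_homog]
      omega
    intro X hX
    have : X ∈ LinearMap.range L := by rw [heq]; exact hX
    obtain ⟨⟨r, s⟩, hx⟩ := this
    exact ⟨r, s, r.2, s.2, by rw [← hx, comb_apply]⟩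
  rw [WW, pow_idealOfVars_eq_span, Ideal.span_le]
  rintro _ ⟨m, hm, rfl⟩
  obtain ⟨r, s, hr, hs, hX⟩ := surj (monomial m 1) (isHomogeneous_monomial _ hm)
  have : (monomial m (1:K)) = (r * h + s * k) + (- (r * (h - T)) - s * (k - U)) := by
    rw [hX]; ring
  show (monomial m (1:K)) ∈ _
  rw [this]
  refine Ideal.add_mem _ (Ideal.mem_sup_left ?_) (Ideal.mem_sup_right ?_)
  · exact Ideal.add_mem _ (Ideal.mul_mem_left _ _ (Ideal.subset_span (by simp)))
      (Ideal.mul_mem_left _ _ (Ideal.subset_span (by simp)))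
  · refine Ideal.sub_mem _ (neg_mem ?_) ?_
    · exact WW_mul (by omega) (homog_mem_WW hr) hh.2.2
    · exact WW_mul (by omega) (homog_mem_WW hs) hk.2.2

lemma Low.zero_eval {h T : MvPolynomial (Fin 2) K} (hh : Low h 0 T) : eval 0 h ≠ 0 := by
  intro h0
  have : h ∈ WW K 1 := by
    rw [mem_WW]
    intro s hs
    have : s = 0 := by
      rw [← Finsupp.degree_eq_zero_iff]; omega
    rw [this, ← constantCoeff_eq, ← h0]
    simp [constantCoeff_eq, MvPolynomial.eval_zero]
  have := hh.le this
  omega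

lemma local_unit {h k T U : MvPolynomial (Fin 2) K} {a b : ℕ} (hh : Low h a T) (hk : Low k b U)
    (hTU : IsRelPrime T U) : ∃ c : MvPolynomial (Fin 2) K, eval 0 c ≠ 0 ∧
      ∀ w ∈ WW K (a + b), c * w ∈ Ideal.span {h, k} := by
  rcases Nat.eq_zero_or_pos a with rfl | ha
  · exact ⟨h, hh.zero_eval, fun w _ => Ideal.mul_mem_right _ _ (Ideal.subset_span (by simp))⟩
  rcases Nat.eq_zero_or_pos b with rfl | hb
  · exact ⟨k, hk.zero_eval, fun w _ => Ideal.mul_mem_right _ _ (Ideal.subset_span (by simp))⟩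
  obtain ⟨a, rfl⟩ : ∃ a', a = a' + 1 := ⟨a - 1, by omega⟩
  obtain ⟨b, rfl⟩ : ∃ b', b = b' + 1 := ⟨b - 1, by omega⟩
  set I := Ideal.span {h, k} with hI
  let N := Submodule.map I.mkQ (WW K (a + b + 1))
  obtain ⟨c, hc1, hc2⟩ := Submodule.exists_sub_one_mem_and_smul_eq_zero_of_fg_of_le_smul
    (idealOfVars (Fin 2) K) N ((IsNoetherian.noetherian _).map _) (by
      rintro _ ⟨w, hw, rfl⟩
      obtain ⟨i, hi, w', hw', rfl⟩ := Submodule.mem_sup.1 (WW_le hh hk hTU hw)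
      have e : I.mkQ (i + w') = I.mkQ w' := by
        rw [map_add]
        have : I.mkQ i = 0 := by
          rw [← LinearMap.mem_ker, Submodule.ker_mkQ]; exact hi
        rw [this, zero_add]
      rw [e]
      have h2 : w' ∈ idealOfVars (Fin 2) K • WW K (a + b + 1) := by
        have : WW K (a + b + 2) = idealOfVars (Fin 2) K * WW K (a + b + 1) := by
          rw [WW, pow_succ']
        rw [this] at hw'
        exact hw'
      have := Submodule.mem_map_of_mem (f := I.mkQ) h2
      rwa [Submodule.map_smul''] at this)
  refine ⟨c, ?_, ?_⟩
  · have h1 : c - 1 ∈ WW K 1 := by simpa [WW] using hc1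
    have := mem_WW.1 h1 0 (by simp)
    rw [coeff_sub, sub_eq_zero] at this
    rw [MvPolynomial.eval_zero, constantCoeff_eq, this]
    simp
  · intro w hw
    have := hc2 (I.mkQ w) (Submodule.mem_map_of_mem (WW_mono (by omega) hw))
    rw [← map_smul, ← LinearMap.mem_ker, Submodule.ker_mkQ] at this
    exact this

lemma exists_embed {Q : Type*} [AddCommGroup Q] [Module K Q] [FiniteDimensional K Q] {n : ℕ}
    (h : Module.finrank K Q ≤ n) : ∃ φ : Q →ₗ[K] (Fin n → K), Function.Injective φ := by
  have h1 : Module.finrank K Q ≤ Module.finrank K (Fin n → K) := by simpa using h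
  let b := Module.finBasis K Q
  let e := b.equivFun
  refine ⟨(LinearMap.pi (fun i : Fin n => if hi : (i : ℕ) < Module.finrank K Q then
    LinearMap.proj (R := K) (φ := fun _ => K) (⟨i, hi⟩ : Fin (Module.finrank K Q)) else 0)).comp e.toLinearMap, ?_⟩
  intro x y hxy
  apply e.injective
  ext i
  have := congrFun hxy (⟨i, by omega⟩ : Fin n)
  simpa using this

lemma local_map {h k T U : MvPolynomial (Fin 2) K} {a b : ℕ} (hh : Low h a T) (hk : Low k b U)
    (hTU : IsRelPrime T U) : ∃ φ : MvPolynomial (Fin 2) K →ₗ[K] (Fin (a * b) → K),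
      ∀ F, φ F = 0 → ∃ c, eval 0 c ≠ 0 ∧ c * F ∈ Ideal.span {h, k} := by
  obtain ⟨c, hc, hcw⟩ := local_unit hh hk hTU
  let W : Submodule K (MvPolynomial (Fin 2) K) := (WW K (a + b)).restrictScalars K
  let L : (VV K b × VV K a) →ₗ[K] (MvPolynomial (Fin 2) K ⧸ W) := W.mkQ.comp (comb h k _ _)
  have hL : Function.Injective L := by
    rw [← LinearMap.ker_eq_bot, LinearMap.ker_eq_bot']
    rintro ⟨r, s⟩ hx
    have hx' : comb h k _ _ (r, s) ∈ LinearMap.ker W.mkQ := hx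
    rw [Submodule.ker_mkQ, comb_apply] at hx'
    have := local_inj hh hk hTU r.2 s.2 hx'
    ext1
    · exact Subtype.ext this.1
    · exact Subtype.ext this.2
  have hsurj : Function.Surjective (W.mkQ.comp (VV K (a + b)).subtype) := by
    intro x
    obtain ⟨p, rfl⟩ := W.mkQ_surjective x
    refine ⟨⟨∑ i ∈ Finset.range (a + b), homogeneousComponent i p, ?_⟩, ?_⟩
    · exact Submodule.sum_mem _ fun i hi => VV_mono (by simpa using hi)
        (homog_mem_VV (homogeneousComponent_isHomogeneous i p))
    · rw [← sub_eq_zero, LinearMap.comp_apply, ← map_sub, ← LinearMap.mem_ker, Submodule.ker_mkQ]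
      show _ ∈ WW K (a + b)
      rw [mem_WW]
      intro s hs
      simp only [Submodule.subtype_apply, coeff_sub, coeff_sum, coeff_homogeneousComponent]
      rw [Finset.sum_ite_eq]
      simp [hs]
  have : FiniteDimensional K (MvPolynomial (Fin 2) K ⧸ W) := Module.Finite.of_surjective _ hsurj
  have d1 : Module.finrank K (MvPolynomial (Fin 2) K ⧸ W) ≤ Module.finrank K (VV K (a + b)) :=
    LinearMap.finrank_le_finrank_of_surjective hsurj
  have d2 := Submodule.finrank_quotient_add_finrank (LinearMap.range L)
  rw [LinearMap.finrank_range_of_inj hL, Module.finrank_prod] at d2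
  have d3 := finrank_VV (K := K) a
  have d4 := finrank_VV (K := K) b
  have d5 := finrank_VV (K := K) (a + b)
  obtain ⟨φ, hφ⟩ := exists_embed (K := K) (Q := (MvPolynomial (Fin 2) K ⧸ W) ⧸ LinearMap.range L) (n := a * b)
    (by nlinarith)
  refine ⟨φ.comp ((LinearMap.range L).mkQ.comp W.mkQ), ?_⟩
  intro F hF
  refine ⟨c, hc, ?_⟩
  have h1 : (LinearMap.range L).mkQ (W.mkQ F) = 0 := by
    apply hφ
    rw [map_zero]; exact hF
  rw [← LinearMap.mem_ker, Submodule.ker_mkQ] at h1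
  obtain ⟨⟨r, s⟩, hrs⟩ := h1
  have h2 : F - comb h k _ _ (r, s) ∈ LinearMap.ker W.mkQ := by
    rw [LinearMap.mem_ker, map_sub, ← hrs]; simp [L]
  rw [Submodule.ker_mkQ, comb_apply] at h2
  have h3 := hcw _ h2
  have e : c * F = c * (F - ((r : MvPolynomial (Fin 2) K) * h + s * k)) + (c * r * h + c * s * k) := by ring
  rw [e]
  refine Ideal.add_mem _ h3 (Ideal.add_mem _ ?_ ?_)
  · exact Ideal.mul_mem_left _ _ (Ideal.subset_span (by simp))
  · exact Ideal.mul_mem_left _ _ (Ideal.subset_span (by simp))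

lemma VV_sub_comp {n : ℕ} {r : MvPolynomial (Fin 2) K} (hr : r ∈ VV K (n + 1)) :
    r - homogeneousComponent n r ∈ VV K n := by
  rw [mem_VV'] at *
  intro s hs
  rw [coeff_sub, coeff_homogeneousComponent]
  split_ifs with h
  · simp
  · simpa using hr s (by omega)

lemma top_rep {h k T U F : MvPolynomial (Fin 2) K} {a b : ℕ} (hh : TopF h (a+1) T)
    (hk : TopF k (b+1) U) (hTU : IsRelPrime T U) (hF : F ∈ VV K (a + b + 1)) (e : ℕ) :
    ∀ r s : MvPolynomial (Fin 2) K, r ∈ VV K (b + e) → s ∈ VV K (a + e) → F = r * h + s * k →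
      ∃ r ∈ VV K b, ∃ s ∈ VV K a, F = r * h + s * k := by
  induction e with
  | zero => intro r s hr hs hx; exact ⟨r, hr, s, hs, hx⟩
  | succ e ih =>
    intro r s hr hs hx
    set A := homogeneousComponent (b + e) r with hA
    set B := homogeneousComponent (a + e) s with hB
    have hA1 : A.IsHomogeneous (b + e) := homogeneousComponent_isHomogeneous _ _
    have hB1 : B.IsHomogeneous (a + e) := homogeneousComponent_isHomogeneous _ _
    have hrA : r - A ∈ VV K (b + e) := VV_sub_comp hr
    have hsB : s - B ∈ VV K (a + e) := VV_sub_comp hs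
    have hz : A * T + B * U ∈ VV K (a + b + e + 1) := by
      have e1 : A * T + B * U = F - ((r - A) * h + A * (h - T)) - ((s - B) * k + B * (k - U)) := by
        rw [hx]; ring
      rw [e1]
      refine Submodule.sub_mem _ (Submodule.sub_mem _ (VV_mono (by omega) hF) ?_) ?_
      · exact Submodule.add_mem _ (VV_mul (by omega) hrA hh.mem)
          (VV_mul (by omega) (homog_mem_VV hA1) hh.2.2)
      · exact Submodule.add_mem _ (VV_mul (by omega) hsB hk.mem)
          (VV_mul (by omega) (homog_mem_VV hB1) hk.2.2)
    have hz2 : A * T + B * U = 0 := by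
      have h1 := hA1.mul hh.1
      have h2 := hB1.mul hk.1
      have e1 : b + e + (a + 1) = a + b + e + 1 := by omega
      have e2 : a + e + (b + 1) = a + b + e + 1 := by omega
      rw [e1] at h1
      rw [e2] at h2
      exact homog_VV_eq_zero (h1.add h2) hz le_rfl
    have hd : U ∣ A * T := ⟨-B, by linear_combination hz2⟩
    obtain ⟨c, hc⟩ : U ∣ A := hTU.symm.dvd_of_dvd_mul_right hd
    have hcB : B = - (c * T) := by
      have : U * (B + c * T) = 0 := by rw [hc] at hz2; linear_combination hz2
      have := (mul_eq_zero.1 this).resolve_left hk.2.1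
      linear_combination this
    have hcV : c ∈ VV K e := by
      by_cases c0 : c = 0
      · rw [c0]; exact zero_mem _
      have hA0 : A ≠ 0 := by rw [hc]; exact mul_ne_zero hk.2.1 c0
      have := congrArg totalDegree hc
      rw [totalDegree_mul_of_isDomain hk.2.1 c0, hA1.totalDegree hA0,
        hk.1.totalDegree hk.2.1] at this
      rw [mem_VV]
      intro s hs
      have h1 : s.degree ≤ c.totalDegree := le_totalDegree hs
      omega
    refine ih (r - c * k) (s + c * h) ?_ ?_ (by rw [hx]; ring)
    · have : r - c * k = (r - A) - c * (k - U) := by rw [hc]; ring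
      rw [this]
      exact Submodule.sub_mem _ hrA (VV_mul (by omega) hcV hk.2.2)
    · have : s + c * h = (s - B) + c * (h - T) := by rw [hcB]; ring
      rw [this]
      exact Submodule.add_mem _ hsB (VV_mul (by omega) hcV hh.2.2)

lemma mem_VV_large (p : MvPolynomial (Fin 2) K) : ∃ n, ∀ m, n ≤ m → p ∈ VV K m := by
  refine ⟨p.totalDegree + 1, fun m hm => ?_⟩
  rw [mem_VV]
  intro s hs
  have h1 : s.degree ≤ p.totalDegree := le_totalDegree hs
  omega

/-- translation -/
noncomputable def tau (P : Fin 2 → K) : MvPolynomial (Fin 2) K →ₐ[K] MvPolynomial (Fin 2) K :=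
  aeval (fun i => X i + C (P i))

lemma tau_tau (P : Fin 2 → K) (F : MvPolynomial (Fin 2) K) : tau (-P) (tau P F) = F := by
  have : (tau (-P)).comp (tau P) = AlgHom.id K _ := by
    ext i; simp [tau]
  exact DFunLike.congr_fun this F

lemma eval_tau (P : Fin 2 → K) (Q : Fin 2 → K) (F : MvPolynomial (Fin 2) K) :
    eval Q (tau P F) = eval (Q + P) F := by
  have : (aeval Q : MvPolynomial (Fin 2) K →ₐ[K] K).comp (tau P) = aeval (Q + P) := by
    ext i; simp [tau]
  have := DFunLike.congr_fun this F
  simpa [aeval_eq_eval] using this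

theorem bezout [IsAlgClosed K] {h k T U : MvPolynomial (Fin 2) K} {a b : ℕ} (hh : TopF h a T)
    (hk : TopF k b U) (hTU : IsRelPrime T U) (S : Finset (Fin 2 → K))
    (hS : ∀ P, eval P h = 0 → eval P k = 0 → P ∈ S) (m n : (Fin 2 → K) → ℕ)
    (hloc : ∀ P ∈ S, ∃ T' U', Low (tau P h) (m P) T' ∧ Low (tau P k) (n P) U' ∧ IsRelPrime T' U') :
    a * b ≤ ∑ P ∈ S, m P * n P := by
  rcases Nat.eq_zero_or_pos a with rfl | ha
  · simp
  rcases Nat.eq_zero_or_pos b with rfl | hb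
  · simp
  obtain ⟨a, rfl⟩ : ∃ a', a = a' + 1 := ⟨a - 1, by omega⟩
  obtain ⟨b, rfl⟩ : ∃ b', b = b' + 1 := ⟨b - 1, by omega⟩
  set I := Ideal.span {h, k} with hI
  have key : ∀ P : S, ∃ φ : MvPolynomial (Fin 2) K →ₗ[K] (Fin (m P * n P) → K),
      ∀ F, φ F = 0 → ∃ c, eval (P : Fin 2 → K) c ≠ 0 ∧ c * F ∈ I := by
    rintro ⟨P, hP⟩
    obtain ⟨T', U', h1, h2, h3⟩ := hloc P hP
    obtain ⟨φ, hφ⟩ := local_map h1 h2 h3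
    refine ⟨φ.comp (tau P).toLinearMap, fun F hF => ?_⟩
    obtain ⟨c, hc, hcF⟩ := hφ _ hF
    refine ⟨tau (-P) c, ?_, ?_⟩
    · rw [eval_tau]; simpa using hc
    · rw [AlgHom.toLinearMap_apply] at hcF
      obtain ⟨x, y, hxy⟩ := Ideal.mem_span_pair.1 hcF
      have := congrArg (tau (-P)) hxy
      simp only [map_add, map_mul, tau_tau] at this
      rw [← this]
      exact Ideal.mem_span_pair.2 ⟨_, _, rfl⟩
  choose φ hφ using key
  have hglob : ∀ F, (∀ P : S, φ P F = 0) → F ∈ I := by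
    intro F hF
    let J : Ideal (MvPolynomial (Fin 2) K) := 
      Submodule.comap (LinearMap.toSpanSingleton (MvPolynomial (Fin 2) K) (MvPolynomial (Fin 2) K) F) I
    have hJ : ∀ c, c ∈ J ↔ c * F ∈ I := fun c => Iff.rfl
    by_cases hJt : J = ⊤
    · have : (1 : MvPolynomial (Fin 2) K) ∈ J := by rw [hJt]; trivial
      simpa [hJ] using this
    exfalso
    obtain ⟨M, hM, hJM⟩ := Ideal.exists_le_maximal J hJt
    obtain ⟨P, rfl⟩ := isMaximal_iff_eq_vanishingIdeal_singleton.1 hM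
    have hv : ∀ p ∈ J, eval P p = 0 := by
      intro p hp
      have := hJM hp
      rw [mem_vanishingIdeal_singleton_iff] at this
      simpa [aeval_eq_eval] using this
    have hPS : P ∈ S := by
      apply hS
      · exact hv _ ((hJ _).2 (Ideal.mul_mem_right _ _ (Ideal.subset_span (by simp))))
      · exact hv _ ((hJ _).2 (Ideal.mul_mem_right _ _ (Ideal.subset_span (by simp))))
    obtain ⟨c, hc, hcF⟩ := hφ ⟨P, hPS⟩ F (hF _)
    exact hc (hv c ((hJ c).2 hcF))
  let Φ : VV K (a + b + 1) →ₗ[K] (∀ P : S, Fin (m P * n P) → K) :=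
    LinearMap.pi (fun P => (φ P).comp (VV K (a + b + 1)).subtype)
  have hker : (LinearMap.ker Φ).map (VV K (a + b + 1)).subtype ≤
      LinearMap.range (comb h k (VV K b) (VV K a)) := by
    rintro _ ⟨⟨F, hFV⟩, hF, rfl⟩
    have hFI : F ∈ I := hglob F (fun P => congrFun (LinearMap.mem_ker.1 hF) P)
    obtain ⟨r, s, hrs⟩ := Ideal.mem_span_pair.1 hFI
    obtain ⟨n1, hn1⟩ := mem_VV_large r
    obtain ⟨n2, hn2⟩ := mem_VV_large s
    obtain ⟨r', hr', s', hs', hF'⟩ := top_rep hh hk hTU hFV (n1 + n2) r s (hn1 _ (by omega))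
      (hn2 _ (by omega)) hrs.symm
    refine ⟨(⟨r', hr'⟩, ⟨s', hs'⟩), ?_⟩
    rw [comb_apply]
    exact hF'.symm
  have d1 := LinearMap.finrank_range_add_finrank_ker Φ
  have d2 : Module.finrank K (LinearMap.range Φ) ≤ ∑ P ∈ S, m P * n P := by
    refine (Submodule.finrank_le _).trans ?_
    rw [Module.finrank_pi_fintype]
    simp only [Module.finrank_fin_fun]
    rw [Finset.sum_coe_sort S (fun P => m P * n P)]
  have d3 : Module.finrank K (LinearMap.ker Φ) ≤ Module.finrank K (VV K b) + Module.finrank K (VV K a) := by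
    rw [← Module.finrank_prod, ← Submodule.finrank_map_subtype_eq]
    exact (Submodule.finrank_mono hker).trans (LinearMap.finrank_range_le _)
  have d4 := finrank_VV (K := K) a
  have d5 := finrank_VV (K := K) b
  have d6 := finrank_VV (K := K) (a + b + 1)
  nlinarith

end Bezout2


section Curve

variable {K : Type*} [Field K] [CharP K 2]

lemma odd_cast {R : Type*} [CommRing R] [CharP R 2] {n : ℕ} (h : Odd n) : (n : R) = 1 := by
  obtain ⟨m, rfl⟩ := h
  have : (2 : R) = 0 := CharTwo.two_eq_zero
  push_cast
  rw [this]; simp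

lemma pderiv_pow_odd (j : Fin 2) {n : ℕ} (hn : Even n) (L : MvPolynomial (Fin 2) K) :
    pderiv j (L ^ (n + 1)) = L ^ n * pderiv j L := by
  rw [Derivation.leibniz_pow]
  have : ((n + 1 : ℕ) : MvPolynomial (Fin 2) K) = 1 := odd_cast hn.add_one
  rw [nsmul_eq_mul, this]; simp

lemma prime_not_dvd {p : MvPolynomial (Fin 2) K} (hp : Prime p) (h0 : p ∣ X 0) (h1 : p ∣ X 1) :
    False := by
  have := (hp.irreducible.associated_of_dvd (X_prime (i := (0 : Fin 2)) (R := K)).irreducible h0)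
  have h2 : (X 0 : MvPolynomial (Fin 2) K) ∣ X 1 := this.symm.dvd.trans h1
  rw [X_dvd_X] at h2
  simp at h2

lemma sq_dvd_pderiv {p T : MvPolynomial (Fin 2) K} (h : p * p ∣ T) (j : Fin 2) :
    p ∣ pderiv j T := by
  obtain ⟨c, rfl⟩ := h
  rw [Derivation.leibniz, Derivation.leibniz]
  simp only [smul_eq_mul]
  exact ⟨p * pderiv j c + c * (pderiv j p + pderiv j p), by ring⟩

lemma pd0 : pderiv 0 (X 0 + X 1 : MvPolynomial (Fin 2) K) = 1 := by
  rw [map_add, pderiv_X_self, pderiv_X_of_ne (by decide)]; simp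

lemma pd1 : pderiv 1 (X 0 + X 1 : MvPolynomial (Fin 2) K) = 1 := by
  rw [map_add, pderiv_X_self, pderiv_X_of_ne (by decide)]; simp

/-- local lowest form -/
noncomputable def TT (q : ℕ) (a b c : K) : MvPolynomial (Fin 2) K :=
  C a * X 0 ^ (q + 1) + C b * X 1 ^ (q + 1) + C c * (X 0 + X 1) ^ (q + 1)

lemma TT_homog (q : ℕ) (a b c : K) : (TT q a b c).IsHomogeneous (q + 1) := by
  have h0 := ((isHomogeneous_X K (0 : Fin 2)).pow (q + 1)).C_mul a
  have h1 := ((isHomogeneous_X K (1 : Fin 2)).pow (q + 1)).C_mul b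
  have h2 := (((isHomogeneous_X K (0 : Fin 2)).add (isHomogeneous_X K (1 : Fin 2))).pow (q + 1)).C_mul c
  rw [one_mul] at h0 h1 h2
  exact (h0.add h1).add h2

lemma TT_sqfree (i : ℕ) (hi : 1 ≤ i) {a b c : K} (h : a * b + a * c + b * c ≠ 0)
    {p : MvPolynomial (Fin 2) K} (hp : Prime p) : ¬ p * p ∣ TT (2 ^ i) a b c := by
  intro hd
  have he : Even (2 ^ i) := (Nat.even_pow.2 ⟨even_two, by omega⟩)
  have e2 : (2 : MvPolynomial (Fin 2) K) = 0 := CharTwo.two_eq_zero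
  have d0 := sq_dvd_pderiv hd 0
  have d1 := sq_dvd_pderiv hd 1
  rw [TT] at d0 d1
  simp only [map_add, pderiv_C_mul, pderiv_pow_odd _ he, pd0, pd1] at d0 d1
  simp only [map_add, pderiv_X_self, pderiv_X_of_ne (show (1 : Fin 2) ≠ 0 by decide), smul_eq_C_mul,
    pderiv_X_of_ne (show (0 : Fin 2) ≠ 1 by decide), add_pow_char_pow, mul_one, mul_zero, add_zero, zero_add] at d0 d1
  have hu : IsUnit (C (a * b + a * c + b * c) : MvPolynomial (Fin 2) K) :=
    (isUnit_iff_ne_zero.2 h).map C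
  have k0 : p ∣ C (a * b + a * c + b * c) * X 0 ^ (2 ^ i) := by
    have := dvd_add (d0.mul_left (C (b + c))) (d1.mul_left (C c))
    refine this.trans (dvd_of_eq ?_)
    simp only [C_add, C_mul]
    linear_combination (C c * C c * X 0 ^ 2 ^ i + C c * C b * X 1 ^ 2 ^ i + C c * C c * X 1 ^ 2 ^ i) * e2
  have k1 : p ∣ C (a * b + a * c + b * c) * X 1 ^ (2 ^ i) := by
    have := dvd_add (d0.mul_left (C c)) (d1.mul_left (C (a + c)))
    refine this.trans (dvd_of_eq ?_)
    simp only [C_add, C_mul]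
    linear_combination (C c * C c * X 0 ^ 2 ^ i + C c * C a * X 0 ^ 2 ^ i + C c * C c * X 1 ^ 2 ^ i) * e2
  rw [hu.dvd_mul_left] at k0 k1
  exact prime_not_dvd hp (hp.dvd_of_dvd_pow k0) (hp.dvd_of_dvd_pow k1)

lemma TT_ne (i : ℕ) (hi : 1 ≤ i) {a b c : K} (h : a * b + a * c + b * c ≠ 0) :
    TT (2 ^ i) a b c ≠ 0 := by
  intro h0
  apply TT_sqfree i hi h (X_prime (i := (0 : Fin 2)) (R := K))
  rw [h0]; exact dvd_zero _

lemma TT_relprime (i : ℕ) (hi : 1 ≤ i) {a b c : K} (h : a * b + a * c + b * c ≠ 0)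
    {A B : MvPolynomial (Fin 2) K} (hAB : A * B = TT (2 ^ i) a b c) : IsRelPrime A B := by
  apply WfDvdMonoid.isRelPrime_of_no_irreducible_factors
  · rintro ⟨rfl, rfl⟩
    exact TT_ne i hi h (by rw [← hAB]; simp)
  · intro p hp h1 h2
    exact TT_sqfree i hi h hp.prime (by rw [← hAB]; exact mul_dvd_mul h1 h2)

/-- the curve -/
noncomputable def ff (K : Type*) [Field K] (t : ℕ) : MvPolynomial (Fin 2) K :=
  X 0 ^ t + X 1 ^ t + 1 + (X 0 + X 1 + 1) ^ t

lemma pow_local (i l : ℕ) (hi : 1 ≤ i) (hl : Odd l) (α : K) (h1 : α ^ l = 1) (h2 : α ^ 2 ^ i = α)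
    {u : MvPolynomial (Fin 2) K} (hu : u ∈ WW K 1) :
    (u + C α) ^ (2 ^ i * l + 1) - (u + C α + u ^ 2 ^ i + C α⁻¹ * u ^ (2 ^ i + 1)) ∈ WW K (2 ^ i + 2) := by
  have hα : α ≠ 0 := by
    rintro rfl
    rw [zero_pow (by obtain ⟨m, rfl⟩ := hl; omega)] at h1
    exact zero_ne_one h1
  obtain ⟨k, hk⟩ := Polynomial.powAddExpansion (C α) (u ^ 2 ^ i) l
  have e1 : (C α : MvPolynomial (Fin 2) K) ^ l = 1 := by rw [← C_pow, h1, C_1]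
  have e2 : (C α : MvPolynomial (Fin 2) K) ^ (l - 1) = C α⁻¹ := by
    rw [← C_pow]
    congr 1
    apply eq_inv_of_mul_eq_one_left
    rw [← pow_succ, Nat.sub_add_cancel, h1]
    obtain ⟨m, rfl⟩ := hl; omega
  have e3 : (C α : MvPolynomial (Fin 2) K) * C α⁻¹ = 1 := by
    rw [← C_mul, mul_inv_cancel₀ hα, C_1]
  have e4 : (u + C α) ^ (2 ^ i) = C α + u ^ 2 ^ i := by
    rw [add_pow_char_pow, ← C_pow, h2, add_comm]
  rw [e1, e2, odd_cast hl, one_mul] at hk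
  have : (u + C α) ^ (2 ^ i * l + 1) - (u + C α + u ^ 2 ^ i + C α⁻¹ * u ^ (2 ^ i + 1)) =
      (k * (u + C α)) * (u ^ 2 ^ i) ^ 2 := by
    rw [pow_succ, pow_mul, e4, hk]
    linear_combination u ^ 2 ^ i * e3
  rw [this, ← pow_mul]
  apply Ideal.mul_mem_left
  have h3 : u ^ (2 ^ i * 2) ∈ WW K (2 ^ i * 2) := by
    have := Ideal.pow_mem_pow hu (2 ^ i * 2)
    rwa [WW, pow_one] at this
  apply WW_mono _ h3
  have : 2 ≤ 2 ^ i := by calc 2 = 2 ^ 1 := rfl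
    _ ≤ 2 ^ i := Nat.pow_le_pow_right (by norm_num) hi
  omega

lemma det_ne {α β γ : K} (ha : α ≠ 0) (hb : β ≠ 0) (hc : γ ≠ 0) (h : γ = α + β + 1) :
    α⁻¹ * β⁻¹ + α⁻¹ * γ⁻¹ + β⁻¹ * γ⁻¹ ≠ 0 := by
  have e2 : (2 : K) = 0 := CharTwo.two_eq_zero
  have : α⁻¹ * β⁻¹ + α⁻¹ * γ⁻¹ + β⁻¹ * γ⁻¹ = α⁻¹ * β⁻¹ * γ⁻¹ := by
    field_simp
    rw [h]
    linear_combination (α + β) * e2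
  rw [this]
  positivity

lemma local_ff (i l : ℕ) (hi : 1 ≤ i) (hl : Odd l) (hd : l ∣ 2 ^ i - 1) (P : Fin 2 → K)
    (h0 : P 0 ^ l = 1) (h1 : P 1 ^ l = 1) (h2 : (P 0 + P 1 + 1) ^ l = 1) :
    Low (tau P (ff K (2 ^ i * l + 1))) (2 ^ i + 1) (TT (2 ^ i) (P 0)⁻¹ (P 1)⁻¹ (P 0 + P 1 + 1)⁻¹) ∧
    ((P 0)⁻¹ * (P 1)⁻¹ + (P 0)⁻¹ * (P 0 + P 1 + 1)⁻¹ + (P 1)⁻¹ * (P 0 + P 1 + 1)⁻¹ ≠ 0) := by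
  have l0 : l ≠ 0 := by obtain ⟨m, rfl⟩ := hl; omega
  have nz : ∀ x : K, x ^ l = 1 → x ≠ 0 := by
    rintro x hx rfl
    rw [zero_pow l0] at hx
    exact zero_ne_one hx
  have hdet := det_ne (nz _ h0) (nz _ h1) (nz _ h2) rfl
  have fx : ∀ x : K, x ^ l = 1 → x ^ 2 ^ i = x := by
    intro x hx
    obtain ⟨m, hm⟩ := hd
    have : 2 ^ i = l * m + 1 := by
      have : 0 < 2 ^ i := by positivity
      omega
    rw [this, pow_succ, pow_mul, hx]; simp
  refine ⟨⟨TT_homog _ _ _ _, TT_ne i hi hdet, ?_⟩, hdet⟩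
  have x0 : (X 0 : MvPolynomial (Fin 2) K) ∈ WW K 1 := homog_mem_WW (isHomogeneous_X K 0)
  have x1 : (X 1 : MvPolynomial (Fin 2) K) ∈ WW K 1 := homog_mem_WW (isHomogeneous_X K 1)
  have a0 := pow_local i l hi hl (P 0) h0 (fx _ h0) x0
  have a1 := pow_local i l hi hl (P 1) h1 (fx _ h1) x1
  have a2 := pow_local i l hi hl _ h2 (fx _ h2) ((WW K 1).add_mem x0 x1)
  have := (WW K _).add_mem ((WW K _).add_mem a0 a1) a2
  convert this using 1
  have e2 : (2 : MvPolynomial (Fin 2) K) = 0 := CharTwo.two_eq_zero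
  have et : tau P (ff K (2 ^ i * l + 1)) = (X 0 + C (P 0)) ^ (2 ^ i * l + 1) +
      (X 1 + C (P 1)) ^ (2 ^ i * l + 1) + 1 + (X 0 + X 1 + C (P 0 + P 1 + 1)) ^ (2 ^ i * l + 1) := by
    simp only [ff, tau, map_add, map_pow, aeval_X, map_one]
    ring
  rw [et, TT, add_pow_char_pow (X 0) (X 1)]
  simp only [C_add, C_1]
  linear_combination (X 0 + X 1 + C (P 0) + C (P 1) + X 0 ^ 2 ^ i + X 1 ^ 2 ^ i + 1) * e2

end Curve


section Curve2

variable {K : Type*} [Field K] [CharP K 2]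

lemma TopF.unique {p T U : MvPolynomial (Fin 2) K} {m n : ℕ} (h : TopF p m T) (h' : TopF p n U) :
    m = n ∧ T = U := by
  have aux : ∀ {m n : ℕ} {T U : MvPolynomial (Fin 2) K}, TopF p m T → TopF p n U → m ≤ n := by
    intro m n T U h h'
    by_contra hc
    have h1 : T ∈ VV K m := by
      have := (VV K m).sub_mem (VV_mono (by omega) h'.mem) h.2.2
      simpa using this
    exact h.2.1 (homog_VV_eq_zero h.1 h1 le_rfl)
  have e : m = n := le_antisymm (aux h h') (aux h' h)
  subst e
  refine ⟨rfl, ?_⟩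
  have h1 : T - U ∈ VV K m := by
    have := (VV K m).sub_mem h'.2.2 h.2.2
    simpa using this
  exact sub_eq_zero.1 (homog_VV_eq_zero (h.1.sub h'.1) h1 le_rfl)

/-- top form of the curve -/
noncomputable def FF (K : Type*) [Field K] (t : ℕ) : MvPolynomial (Fin 2) K :=
  X 0 ^ t + X 1 ^ t + (X 0 + X 1) ^ t

lemma one_mem_VV : (1 : MvPolynomial (Fin 2) K) ∈ VV K 1 := homog_mem_VV (isHomogeneous_one _ _)

lemma hL : (X 0 + X 1 : MvPolynomial (Fin 2) K).IsHomogeneous 1 :=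
  (isHomogeneous_X K (0 : Fin 2)).add (isHomogeneous_X K (1 : Fin 2))

lemma pow_top {L : MvPolynomial (Fin 2) K} (h : L.IsHomogeneous 1) (n : ℕ) :
    (L + 1) ^ (n + 1) - L ^ (n + 1) - ((n + 1 : ℕ) : MvPolynomial (Fin 2) K) * L ^ n ∈ VV K n := by
  induction n with
  | zero => simp
  | succ n ih =>
    have e : (L + 1) ^ (n + 2) - L ^ (n + 2) - ((n + 2 : ℕ) : MvPolynomial (Fin 2) K) * L ^ (n + 1) =
      (L + 1) * ((L + 1) ^ (n + 1) - L ^ (n + 1) - ((n + 1 : ℕ) : MvPolynomial (Fin 2) K) * L ^ n) +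
      C ((n + 1 : ℕ) : K) * L ^ n := by
      have : (C ((n + 1 : ℕ) : K) : MvPolynomial (Fin 2) K) = ((n + 1 : ℕ) : MvPolynomial (Fin 2) K) := by
        rw [map_natCast]
      rw [this]
      push_cast
      ring
    rw [e]
    refine (VV K _).add_mem (VV_mul (m := 2) (n := n) (by omega) ?_ ih) ?_
    · exact (VV K _).add_mem (homog_mem_VV h) (VV_mono (by omega) one_mem_VV)
    · have := (h.pow n).C_mul ((n + 1 : ℕ) : K)
      rw [one_mul] at this
      exact homog_mem_VV this

lemma ff_expand {n : ℕ} (hn : Even n) (h1 : 1 ≤ n) :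
    ff K (n + 1) - FF K (n + 1) - (X 0 + X 1) ^ n ∈ VV K n := by
  have := (VV K n).add_mem (pow_top (K := K) hL n) (VV_mono h1 one_mem_VV)
  rw [odd_cast hn.add_one] at this
  convert this using 1
  rw [ff, FF]; ring

lemma FF_ne {n : ℕ} (hn : Even n) (h1 : 1 ≤ n) : FF K (n + 1) ≠ 0 := by
  intro h
  have := congrArg (fun p => eval (![0, 1] : Fin 2 → K) (pderiv 0 p)) h
  simp [FF, pderiv_pow_odd _ hn, pderiv_X_of_ne (show (1 : Fin 2) ≠ 0 by decide),
    show n ≠ 0 by omega] at this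

lemma ff_top {n : ℕ} (hn : Even n) (h1 : 1 ≤ n) : TopF (ff K (n + 1)) (n + 1) (FF K (n + 1)) := by
  refine ⟨?_, FF_ne hn h1, ?_⟩
  · have h0 := (isHomogeneous_X K (0 : Fin 2)).pow (n + 1)
    have h1 := (isHomogeneous_X K (1 : Fin 2)).pow (n + 1)
    have h2 := (hL (K := K)).pow (n + 1)
    rw [one_mul] at h0 h1 h2
    exact (h0.add h1).add h2
  · have h2 := (hL (K := K)).pow n
    rw [one_mul] at h2
    have := (VV K (n + 1)).add_mem (VV_mono (Nat.le_succ n) (ff_expand (K := K) hn h1)) (homog_mem_VV h2)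
    simpa using this

lemma VV_top {b : ℕ} {k : MvPolynomial (Fin 2) K} (h : k ∈ VV K (b + 1)) :
    ∃ k', k'.IsHomogeneous b ∧ k - k' ∈ VV K b := by
  refine ⟨homogeneousComponent b k, homogeneousComponent_isHomogeneous _ _, ?_⟩
  rw [mem_VV'] at *
  intro s hs
  rw [coeff_sub, coeff_homogeneousComponent]
  by_cases e : s.degree = b
  · simp [e]
  · simp [e, h s (by omega)]

lemma top_relprime {n : ℕ} (hn : Even n) (h1 : 1 ≤ n) {h k A B : MvPolynomial (Fin 2) K} {a b : ℕ}
    (hhk : h * k = ff K (n + 1)) (hA : TopF h a A) (hB : TopF k b B) (ha : 1 ≤ a) (hb : 1 ≤ b) :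
    IsRelPrime A B := by
  obtain ⟨a, rfl⟩ : ∃ a', a = a' + 1 := ⟨a - 1, by omega⟩
  obtain ⟨b, rfl⟩ : ∃ b', b = b' + 1 := ⟨b - 1, by omega⟩
  have hAB := hA.mul hB
  rw [hhk] at hAB
  obtain ⟨e, eF⟩ := hAB.unique (ff_top hn h1)
  have e : n = a + b + 1 := by omega
  obtain ⟨h', hh', hh2⟩ := VV_top hA.2.2
  obtain ⟨k', hk', hk2⟩ := VV_top hB.2.2
  have key : (X 0 + X 1) ^ n = A * k' + B * h' := by
    rw [← sub_eq_zero]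
    have g1 := (hL (K := K)).pow n
    have g2 := hA.1.mul hk'
    have g3 := hB.1.mul hh'
    rw [one_mul] at g1
    rw [show a + 1 + b = n by omega] at g2
    rw [show b + 1 + a = n by omega] at g3
    refine homog_VV_eq_zero (g1.sub (g2.add g3)) (m := n) ?_ le_rfl
    have c1 := ff_expand (K := K) hn h1
    have c2 : A * (k - B - k') ∈ VV K n := VV_mul (by omega) (homog_mem_VV hA.1) hk2
    have c3 : B * (h - A - h') ∈ VV K n := VV_mul (by omega) (homog_mem_VV hB.1) hh2
    have c4 : (h - A) * (k - B) ∈ VV K n := VV_mul (by omega) hA.2.2 hB.2.2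
    have := (VV K n).sub_mem ((VV K n).add_mem ((VV K n).add_mem c2 c3) c4) c1
    convert this using 1
    linear_combination -hhk + eF
  apply WfDvdMonoid.isRelPrime_of_no_irreducible_factors
  · rintro ⟨h0, -⟩
    exact hA.2.1 h0
  · intro p hp p1 p2
    have hp := hp.prime
    have d1 : p ∣ (X 0 + X 1) ^ n := by
      rw [key]; exact dvd_add (p1.mul_right _) (p2.mul_right _)
    have hd : p * p ∣ FF K (n + 1) := by rw [← eF]; exact mul_dvd_mul p1 p2
    have d2 := sq_dvd_pderiv hd 0
    have d3 := sq_dvd_pderiv hd 1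
    rw [FF, map_add, map_add, pderiv_pow_odd _ hn, pderiv_pow_odd _ hn, pderiv_pow_odd _ hn] at d2 d3
    rw [pd0, pderiv_X_self, pderiv_X_of_ne (by decide), mul_one, mul_zero, add_zero, mul_one,
      dvd_add_left d1] at d2
    rw [pd1, pderiv_X_self, pderiv_X_of_ne (by decide), mul_one, mul_zero, zero_add, mul_one,
      dvd_add_left d1] at d3
    exact prime_not_dvd hp (hp.dvd_of_dvd_pow d2) (hp.dvd_of_dvd_pow d3)

lemma sing (i l : ℕ) (hi : 1 ≤ i) {h k : MvPolynomial (Fin 2) K}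
    (hhk : h * k = ff K (2 ^ i * l + 1)) (P : Fin 2 → K) (h0 : eval P h = 0) (h1 : eval P k = 0) :
    P 0 ^ l = 1 ∧ P 1 ^ l = 1 ∧ (P 0 + P 1 + 1) ^ l = 1 := by
  have hn : Even (2 ^ i * l) := (Nat.even_pow.2 ⟨even_two, by omega⟩ : Even (2 ^ i)).mul_right l
  have e2 : (2 : K) = 0 := CharTwo.two_eq_zero
  have D : ∀ j, eval P (pderiv j (ff K (2 ^ i * l + 1))) = 0 := by
    intro j
    rw [← hhk, Derivation.leibniz]
    simp [h0, h1]
  have d0 := D 0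
  have d1 := D 1
  have f0 : eval P (ff K (2 ^ i * l + 1)) = 0 := by rw [← hhk]; simp [h0]
  rw [ff] at d0 d1 f0
  simp only [map_add, pderiv_pow_odd _ hn, pderiv_one, pderiv_X_self,
    pderiv_X_of_ne (show (1 : Fin 2) ≠ 0 by decide), map_mul, map_pow, eval_X, map_one, map_zero,
    pderiv_X_of_ne (show (0 : Fin 2) ≠ 1 by decide), add_zero, zero_add, mul_one, mul_zero] at d0 d1 f0
  have hw : (P 0 + P 1 + 1) ^ (2 ^ i * l) = 1 := by
    linear_combination f0 - P 0 * d0 - P 1 * d1 - e2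
  have hx : P 0 ^ (2 ^ i * l) = 1 := by linear_combination d0 - hw - e2
  have hy : P 1 ^ (2 ^ i * l) = 1 := by linear_combination d1 - hw - e2
  have root : ∀ x : K, x ^ (2 ^ i * l) = 1 → x ^ l = 1 := by
    intro x hx
    rw [mul_comm, pow_mul] at hx
    have : (x ^ l - 1) ^ 2 ^ i = 0 := by
      rw [sub_pow_char_pow, hx]; simp
    exact sub_eq_zero.1 (pow_eq_zero_iff (by positivity) |>.1 this)
  exact ⟨root _ hx, root _ hy, root _ hw⟩

lemma exists_S (l : ℕ) (hl : Odd l) (hl3 : 3 ≤ l) : ∃ S : Finset (Fin 2 → K),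
    (∀ P, P ∈ S ↔ P 0 ^ l = 1 ∧ P 1 ^ l = 1 ∧ (P 0 + P 1 + 1) ^ l = 1) ∧
    S.card ≤ l + (l - 1) * (l - 1) := by
  classical
  have e2 : (2 : K) = 0 := CharTwo.two_eq_zero
  let μ := Polynomial.nthRootsFinset l (1 : K)
  have hμ : ∀ x, x ∈ μ ↔ x ^ l = 1 := fun x => Polynomial.mem_nthRootsFinset (by omega) 1
  have hc : μ.card ≤ l := (Multiset.toFinset_card_le _).trans (Polynomial.card_nthRoots l 1)
  let N : K → Finset K := fun a => μ.filter (fun b => (a + b + 1) ^ l = 1)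
  have hN : ∀ a, (N a).card ≤ l := fun a => (Finset.card_filter_le _ _).trans hc
  have hN' : ∀ a ∈ μ.erase 1, (N a).card ≤ l - 1 := by
    intro a ha
    have ha1 : a ≠ 1 := (Finset.mem_erase.1 ha).1
    have : ∑ b ∈ N a, (1 : ZMod 2) = 0 := by
      refine Finset.sum_involution (fun b _ => a + b + 1) ?_ ?_ ?_ ?_
      · intro _ _; decide
      · intro b _ _ h
        apply ha1
        linear_combination h - e2
      · intro b hb
        simp only [N, Finset.mem_filter, hμ] at hb ⊢
        refine ⟨hb.2, ?_⟩
        rw [show a + (a + b + 1) + 1 = b by linear_combination (a + 1) * e2]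
        exact hb.1
      · intro b _
        linear_combination (a + 1) * e2
    have hev : Even (N a).card := by
      rw [Finset.sum_const, nsmul_eq_mul, mul_one] at this
      exact (ZMod.natCast_eq_zero_iff_even).1 this
    have := hN a
    have : (N a).card ≠ l := by
      intro h
      rw [h] at hev
      exact (Nat.not_even_iff_odd.2 hl) hev
    omega
  refine ⟨(μ.sigma N).image (fun p => ![p.1, p.2]), ?_, ?_⟩
  · intro P
    simp only [Finset.mem_image, Finset.mem_sigma, N, Finset.mem_filter, hμ]
    constructor
    · rintro ⟨p, ⟨h1, h2, h3⟩, rfl⟩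
      exact ⟨h1, h2, h3⟩
    · rintro ⟨h1, h2, h3⟩
      refine ⟨⟨P 0, P 1⟩, ⟨h1, h2, h3⟩, ?_⟩
      ext j; fin_cases j <;> rfl
  · refine Finset.card_image_le.trans ?_
    rw [Finset.card_sigma]
    have h1 : (1 : K) ∈ μ := (hμ 1).2 (one_pow l)
    rw [← Finset.add_sum_erase _ _ h1]
    refine add_le_add (hN 1) ((Finset.sum_le_card_nsmul _ _ _ hN').trans ?_)
    rw [smul_eq_mul, Finset.card_erase_of_mem h1]
    exact Nat.mul_le_mul_right _ (by omega)

end Curve2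


section Count

lemma Low.prod {K : Type*} [Field K] {ι : Type*} (s : Finset ι) (p T : ι → MvPolynomial (Fin 2) K)
    (m : ι → ℕ) (h : ∀ j ∈ s, Low (p j) (m j) (T j)) :
    Low (∏ j ∈ s, p j) (∑ j ∈ s, m j) (∏ j ∈ s, T j) := by
  classical
  induction s using Finset.induction_on with
  | empty => simpa using Low.self (isHomogeneous_one (Fin 2) K) one_ne_zero
  | insert a s ha ih =>
    rw [Finset.prod_insert ha, Finset.prod_insert ha, Finset.sum_insert ha]
    exact (h a (Finset.mem_insert_self a s)).mul (ih fun j hj => h j (Finset.mem_insert_of_mem hj))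

lemma local_count (r : ℕ) (hr : 2 ≤ r) (Q : ℕ) (m : Fin r → ℕ) (h : ∑ s, m s ≤ Q) :
    (r : ℤ) * ∑ s, ((m s * (Q - m s) : ℕ) : ℤ) ≤ (r - 1) * Q ^ 2 := by
  have hm : ∀ s, m s ≤ Q := fun s => (Finset.single_le_sum (fun _ _ => Nat.zero_le _) (Finset.mem_univ s)).trans h
  have e : ∑ s, ((m s * (Q - m s) : ℕ) : ℤ) = Q * (∑ s, (m s : ℤ)) - ∑ s, (m s : ℤ) ^ 2 := by
    rw [Finset.mul_sum, ← Finset.sum_sub_distrib]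
    apply Finset.sum_congr rfl
    intro s _
    push_cast [Nat.cast_sub (hm s)]
    ring
  have cs : (∑ s, (m s : ℤ)) ^ 2 ≤ r * ∑ s, (m s : ℤ) ^ 2 := by
    have := sq_sum_le_card_mul_sum_sq (s := Finset.univ) (f := fun s : Fin r => (m s : ℤ))
    simpa using this
  have ha : (∑ s, (m s : ℤ)) ≤ Q := by exact_mod_cast h
  have ha0 : 0 ≤ (∑ s, (m s : ℤ)) := Finset.sum_nonneg (fun _ _ => by positivity)
  rw [e]
  generalize (∑ s, (m s : ℤ)) = a at *
  generalize (∑ s, (m s : ℤ) ^ 2) = b at *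
  have hr' : (2 : ℤ) ≤ r := by exact_mod_cast hr
  have hQ : (0 : ℤ) ≤ Q := by positivity
  have : 0 ≤ (Q - a : ℤ) * ((r - 1) * Q - a) := by
    apply mul_nonneg (by linarith)
    nlinarith
  nlinarith

lemma numeric (q l t r d N : ℤ) (hl : 3 ≤ l) (hq : 3 * l + 1 ≤ q) (ht : t = q * l + 1) (hr : 2 ≤ r)
    (hd : r * d + 3 = t) (hN : N ≤ l + (l - 1) * (l - 1)) (h : r * (r * (d * (t - d))) ≤ N * ((r - 1) * (q + 1) ^ 2)) :
    False := by
  have e1 : r * (r * (d * (t - d))) = (t - 3) * (r * t - (t - 3)) := by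
    rw [show t - 3 = r * d by linarith]; ring
  have h1 : N * ((r - 1) * (q + 1) ^ 2) ≤ (l + (l - 1) * (l - 1)) * ((r - 1) * (q + 1) ^ 2) := by
    apply mul_le_mul_of_nonneg_right hN
    apply mul_nonneg (by linarith) (by positivity)
  have ht0 : 0 ≤ t := by rw [ht]; nlinarith
  have h2 : (r - 1) * (t ^ 2 - 3 * t - 9) ≤ (t - 3) * (r * t - (t - 3)) := by nlinarith
  have h3 : (r - 1) * (t ^ 2 - 3 * t - 9) ≤ (r - 1) * ((l ^ 2 - l + 1) * (q + 1) ^ 2) := by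
    calc _ ≤ _ := h2
      _ = _ := e1.symm
      _ ≤ _ := h
      _ ≤ _ := h1
      _ = _ := by ring
  have h4 : t ^ 2 - 3 * t - 9 ≤ (l ^ 2 - l + 1) * (q + 1) ^ 2 := le_of_mul_le_mul_left h3 (by linarith)
  subst ht
  have h5 : q * ((3 * l + 1) * (l - 1)) ≤ q * (q * (l - 1)) := by
    apply mul_le_mul_of_nonneg_left _ (by linarith)
    apply mul_le_mul_of_nonneg_right hq (by linarith)
  have hx : 6 ≤ l ^ 2 - l := by nlinarith
  have h6 : 10 * (l ^ 2 - l - 3) ≤ q * (l ^ 2 - l - 3) :=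
    mul_le_mul_of_nonneg_right (by linarith) (by linarith)
  nlinarith

theorem no_split {K : Type*} [Field K] [CharP K 2] [IsAlgClosed K] (i l : ℕ) (hi : 1 ≤ i)
    (hl3 : 3 ≤ l) (hl : Odd l) (hdvd : l ∣ 2 ^ i - 1) (hq : 3 * l + 1 ≤ 2 ^ i) (r d : ℕ) (hr : 2 ≤ r)
    (h A : Fin r → MvPolynomial (Fin 2) K) (R : MvPolynomial (Fin 2) K)
    (hprod : (∏ s, h s) * R = ff K (2 ^ i * l + 1))
    (htop : ∀ s, TopF (h s) d (A s)) (hd : r * d + 3 = 2 ^ i * l + 1) : False := by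
  classical
  have hev : Even (2 ^ i * l) := (Nat.even_pow.2 ⟨even_two, by omega⟩ : Even (2 ^ i)).mul_right l
  have hn1 : 10 ≤ 2 ^ i * l := by nlinarith
  have hf0 : ff K (2 ^ i * l + 1) ≠ 0 := by
    intro h0
    have := ff_top (K := K) hev (by omega)
    rw [h0] at this
    have h1 := homog_VV_eq_zero this.1 (m := 2 ^ i * l + 1) (by simpa using this.2.2) le_rfl
    exact this.2.1 h1
  have hR : R ≠ 0 := by rintro rfl; rw [mul_zero] at hprod; exact hf0 hprod.symm
  have hs0 : ∀ s, h s ≠ 0 := by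
    intro s h0
    apply hf0
    rw [← hprod, Finset.prod_eq_zero (Finset.mem_univ s) h0, zero_mul]
  have hd1 : 1 ≤ d := by
    rcases Nat.eq_zero_or_pos d with rfl | hd0
    · omega
    · exact hd0
  let k : Fin r → MvPolynomial (Fin 2) K := fun s => (∏ j ∈ Finset.univ.erase s, h j) * R
  have hhk : ∀ s, h s * k s = ff K (2 ^ i * l + 1) := by
    intro s
    rw [← hprod, ← Finset.mul_prod_erase _ _ (Finset.mem_univ s), mul_assoc]
  have hk0 : ∀ s, k s ≠ 0 := by
    intro s h0
    apply hf0
    rw [← hhk s, h0, mul_zero]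
  have htau : ∀ P (F : MvPolynomial (Fin 2) K), F ≠ 0 → tau P F ≠ 0 := by
    intro P F hF h0
    apply hF
    have := tau_tau P F
    rw [h0, map_zero] at this
    exact this.symm
  have hm := fun (s : Fin r) (P : Fin 2 → K) => Low.exists (htau P _ (hs0 s))
  choose m T hT using hm
  obtain ⟨S, hS, hcard⟩ := exists_S (K := K) l hl hl3
  have bz : ∀ s, d * (2 ^ i * l + 1 - d) ≤ ∑ P ∈ S, m s P * (2 ^ i + 1 - m s P) := by
    intro s
    obtain ⟨B, hB⟩ := TopF.exists (hk0 s)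
    have hAB := (htop s).mul hB
    rw [hhk s] at hAB
    obtain ⟨e, -⟩ := hAB.unique (ff_top hev (by omega))
    have hdt : d < 2 ^ i * l + 1 := by nlinarith
    have e' : (k s).totalDegree = 2 ^ i * l + 1 - d := by omega
    rw [e'] at hB
    refine bezout (htop s) hB (top_relprime hev (by omega) (hhk s) (htop s) hB hd1 (by omega)) S ?_ _ _ ?_
    · intro P p1 p2
      exact (hS P).2 (sing i l hi (hhk s) P p1 p2)
    · intro P hP
      obtain ⟨n, U, hU⟩ := Low.exists (htau P _ (hk0 s))
      obtain ⟨c1, c2, c3⟩ := (hS P).1 hP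
      obtain ⟨hlow, hdet⟩ := local_ff i l hi hl hdvd P c1 c2 c3
      have hTU := (hT s P).mul hU
      rw [← map_mul, hhk s] at hTU
      obtain ⟨e1, e2⟩ := hTU.unique hlow
      refine ⟨T s P, U, hT s P, ?_, TT_relprime i hi hdet e2⟩
      rw [show 2 ^ i + 1 - m s P = n by omega]
      exact hU
  have loc : ∀ P ∈ S, ∑ s, m s P ≤ 2 ^ i + 1 := by
    intro P hP
    obtain ⟨c1, c2, c3⟩ := (hS P).1 hP
    obtain ⟨hlow, hdet⟩ := local_ff i l hi hl hdvd P c1 c2 c3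
    obtain ⟨n, U, hU⟩ := Low.exists (htau P _ hR)
    have h1 := (Low.prod Finset.univ (fun s => tau P (h s)) (fun s => T s P) (fun s => m s P)
      (fun s _ => hT s P)).mul hU
    rw [← map_prod, ← map_mul, hprod] at h1
    have := (h1.unique hlow).1
    omega
  have hdt : d ≤ 2 ^ i * l + 1 := by nlinarith
  have tot : (r : ℤ) * ((d * (2 ^ i * l + 1 - d) : ℕ) : ℤ) ≤
      ∑ P ∈ S, ∑ s, ((m s P * (2 ^ i + 1 - m s P) : ℕ) : ℤ) := by
    rw [Finset.sum_comm]
    have := Finset.card_nsmul_le_sum (Finset.univ : Finset (Fin r))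
      (fun s => ∑ P ∈ S, ((m s P * (2 ^ i + 1 - m s P) : ℕ) : ℤ))
      ((d * (2 ^ i * l + 1 - d) : ℕ) : ℤ) (fun s _ => by exact_mod_cast bz s)
    simpa using this
  have fin : (r : ℤ) * (r * ((d * (2 ^ i * l + 1 - d) : ℕ) : ℤ)) ≤
      S.card * ((r - 1) * ((2 ^ i : ℕ) + 1) ^ 2) := by
    calc _ ≤ (r : ℤ) * ∑ P ∈ S, ∑ s, ((m s P * (2 ^ i + 1 - m s P) : ℕ) : ℤ) :=
          mul_le_mul_of_nonneg_left tot (by positivity)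
      _ = ∑ P ∈ S, (r : ℤ) * ∑ s, ((m s P * (2 ^ i + 1 - m s P) : ℕ) : ℤ) := Finset.mul_sum _ _ _
      _ ≤ ∑ P ∈ S, ((r : ℤ) - 1) * ((2 ^ i + 1 : ℕ) : ℤ) ^ 2 :=
          Finset.sum_le_sum fun P hP => local_count r hr (2 ^ i + 1) (fun s => m s P) (loc P hP)
      _ = _ := by rw [Finset.sum_const, nsmul_eq_mul]; push_cast; ring
  rw [Nat.cast_mul, Nat.cast_sub hdt] at fin
  have hc' : (S.card : ℤ) ≤ l + (l - 1) * (l - 1) := by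
    have : ((l + (l - 1) * (l - 1) : ℕ) : ℤ) = l + (l - 1) * (l - 1) := by
      push_cast [Nat.cast_sub (show 1 ≤ l by omega)]; ring
    rw [← this]; exact_mod_cast hcard
  exact numeric ((2 ^ i : ℕ) : ℤ) l ((2 ^ i * l + 1 : ℕ) : ℤ) r d S.card (by exact_mod_cast hl3)
    (by exact_mod_cast hq) (by push_cast; ring) (by exact_mod_cast hr) (by exact_mod_cast hd) hc' fin

end Count


section Orbit

variable {K : Type*} [Field K] [CharP K 2] [IsAlgClosed K] [Algebra (ZMod 2) K]
  [Algebra.IsAlgebraic (ZMod 2) K]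

/-- coefficientwise Frobenius -/
noncomputable def Frob (K : Type*) [Field K] [CharP K 2] [IsAlgClosed K] :
    MvPolynomial (Fin 2) K ≃+* MvPolynomial (Fin 2) K :=
  mapEquiv (Fin 2) (frobeniusEquiv K 2)

lemma coeff_Frob (p : MvPolynomial (Fin 2) K) (s : Fin 2 →₀ ℕ) :
    coeff s (Frob K p) = coeff s p ^ 2 := by
  simp [Frob, mapEquiv_apply, coeff_map, frobenius_def]

lemma coeff_Frob_iter (p : MvPolynomial (Fin 2) K) (s : Fin 2 →₀ ℕ) (n : ℕ) :
    coeff s ((Frob K)^[n] p) = coeff s p ^ 2 ^ n := by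
  induction n with
  | zero => simp
  | succ n ih => rw [Function.iterate_succ_apply', coeff_Frob, ih, ← pow_mul, pow_succ]

lemma Frob_iter_irr {p : MvPolynomial (Fin 2) K} (hp : Irreducible p) (n : ℕ) :
    Irreducible ((Frob K)^[n] p) := by
  induction n with
  | zero => simpa
  | succ n ih => rw [Function.iterate_succ_apply']; exact (MulEquiv.irreducible_iff (Frob K)).2 ih

lemma Frob_iter_deg (p : MvPolynomial (Fin 2) K) (n : ℕ) :
    ((Frob K)^[n] p).totalDegree = p.totalDegree := by
  have : ((Frob K)^[n] p).support = p.support := by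
    ext s
    rw [mem_support_iff, mem_support_iff, coeff_Frob_iter, ne_eq, pow_eq_zero_iff (by positivity)]
  rw [totalDegree, totalDegree, this]

lemma Frob_periodic (p : MvPolynomial (Fin 2) K) : 0 < Function.minimalPeriod (Frob K) p := by
  classical
  let S : Set K := (p.support.image (fun s => coeff s p) : Finset K)
  let E := IntermediateField.adjoin (ZMod 2) S
  haveI : FiniteDimensional (ZMod 2) E :=
    IntermediateField.finiteDimensional_adjoin fun x _ => Algebra.IsIntegral.isIntegral x
  haveI : Finite E := Module.finite_of_finite (ZMod 2)
  haveI := Fintype.ofFinite E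
  have hc := Module.natCard_eq_pow_finrank (K := ZMod 2) (V := E)
  rw [Nat.card_zmod, Nat.card_eq_fintype_card] at hc
  apply Function.IsPeriodicPt.minimalPeriod_pos (n := Module.finrank (ZMod 2) E) Module.finrank_pos
  change (Frob K)^[_] p = p
  ext s
  rw [coeff_Frob_iter, ← hc]
  by_cases hs : s ∈ p.support
  · have hm : coeff s p ∈ E := IntermediateField.subset_adjoin _ _
      (by simp only [S, Finset.coe_image]; exact ⟨s, hs, rfl⟩)
    have := FiniteField.pow_card (⟨coeff s p, hm⟩ : E)
    exact congrArg Subtype.val this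
  · rw [notMem_support_iff.1 hs, zero_pow Fintype.card_ne_zero]

lemma Frob_fixed {p : MvPolynomial (Fin 2) K} (h : Frob K p = p) :
    ∃ p0, map (algebraMap (ZMod 2) K) p0 = p := by
  have : p ∈ Set.range (map (algebraMap (ZMod 2) K)) := by
    rw [mem_range_map_iff_coeffs_subset]
    intro c hc
    obtain ⟨s, hs, rfl⟩ := mem_coeffs_iff.1 hc
    have h1 := coeff_Frob p s
    rw [h] at h1
    rcases eq_or_ne (coeff s p) 0 with h0 | h0
    · exact ⟨0, by rw [h0, map_zero]⟩
    · refine ⟨1, ?_⟩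
      rw [map_one]
      apply mul_left_cancel₀ h0
      rw [mul_one, ← sq]; exact h1
  exact this

lemma Frob_map (p : MvPolynomial (Fin 2) (ZMod 2)) :
    Frob K (map (algebraMap (ZMod 2) K) p) = map (algebraMap (ZMod 2) K) p := by
  ext s
  rw [coeff_Frob, coeff_map, ← map_pow]
  congr 1
  generalize coeff s p = c
  revert c
  decide

theorem orbit (g : MvPolynomial (Fin 2) (ZMod 2)) (hg : Irreducible g) :
    Irreducible (map (algebraMap (ZMod 2) K) g) ∨
    ∃ (r d : ℕ) (h A : Fin r → MvPolynomial (Fin 2) K) (c : K), 2 ≤ r ∧ c ≠ 0 ∧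
      (∏ s, h s) * C c = map (algebraMap (ZMod 2) K) g ∧ ∀ s, TopF (h s) d (A s) := by
  classical
  set G := map (algebraMap (ZMod 2) K) g with hG
  have hinj : Function.Injective (map (σ := Fin 2) (algebraMap (ZMod 2) K)) :=
    map_injective _ (algebraMap (ZMod 2) K).injective
  have hG0 : G ≠ 0 := by
    intro h; apply hg.ne_zero; apply hinj; rw [← hG, h, map_zero]
  have hunit : ∀ u : MvPolynomial (Fin 2) K, IsUnit u → ∃ c : K, c ≠ 0 ∧ u = C c := by
    intro u hu
    obtain ⟨c, hc, e⟩ := isUnit_iff_eq_C_of_isReduced.1 hu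
    exact ⟨c, hc.ne_zero, e⟩
  have hGu : ¬ IsUnit G := by
    intro h
    obtain ⟨c, hc, e⟩ := hunit _ h
    apply hg.not_isUnit
    have h1 : g = C (coeff 0 g) := by
      ext s
      by_cases hs : s = 0
      · simp [hs]
      · have := congrArg (coeff s) e
        rw [hG, coeff_map, coeff_C, if_neg (Ne.symm hs)] at this
        rw [coeff_C, if_neg (Ne.symm hs)]
        exact (algebraMap (ZMod 2) K).injective (by rw [this, map_zero])
    have h2 : coeff 0 g ≠ 0 := by
      intro h0
      rw [h0, C_0] at h1
      exact hg.ne_zero h1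
    rw [h1]
    exact (isUnit_iff_ne_zero.2 h2).map C
  obtain ⟨h', hh', hd'⟩ := WfDvdMonoid.exists_irreducible_factor hGu hG0
  obtain ⟨s0, hs0⟩ : ∃ s0, coeff s0 h' ≠ 0 := by
    by_contra hc
    push Not at hc
    exact hh'.ne_zero (by ext s; simpa using hc s)
  have hu : IsUnit (C (coeff s0 h')⁻¹ : MvPolynomial (Fin 2) K) :=
    (isUnit_iff_ne_zero.2 (inv_ne_zero hs0)).map C
  obtain ⟨h, hh, hd, h1⟩ : ∃ h, Irreducible h ∧ h ∣ G ∧ coeff s0 h = 1 := by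
    refine ⟨C (coeff s0 h')⁻¹ * h', (irreducible_isUnit_mul hu).2 hh', (hu.mul_left_dvd).2 hd', ?_⟩
    rw [coeff_C_mul, inv_mul_cancel₀ hs0]
  let hs : ℕ → MvPolynomial (Fin 2) K := fun n => (Frob K)^[n] h
  have irr : ∀ n, Irreducible (hs n) := fun n => Frob_iter_irr hh n
  have hsucc : ∀ n, Frob K (hs n) = hs (n + 1) := fun n => (Function.iterate_succ_apply' _ _ _).symm
  have dv : ∀ n, hs n ∣ G := by
    intro n
    induction n with
    | zero => exact hd
    | succ n ih =>
      rw [← hsucc]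
      have := map_dvd (Frob K) ih
      rwa [hG, Frob_map, ← hG] at this
  have co : ∀ n, coeff s0 (hs n) = 1 := by
    intro n
    simp only [hs]
    rw [coeff_Frob_iter, h1, one_pow]
  set n := Function.minimalPeriod (Frob K) h with hn
  have hn0 : 0 < n := Frob_periodic h
  have hper : hs n = hs 0 := Function.isPeriodicPt_minimalPeriod (Frob K) h
  have rel : Set.Pairwise (Finset.range n : Set ℕ) (Function.onFun IsRelPrime hs) := by
    intro a ha b hb hab
    change IsRelPrime (hs a) (hs b)
    rw [(irr a).isRelPrime_iff_not_dvd, (irr a).dvd_irreducible_iff_associated (irr b)]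
    rintro ⟨u, hu⟩
    obtain ⟨c, -, hc⟩ := hunit _ u.isUnit
    rw [hc] at hu
    have h2 := congrArg (coeff s0) hu
    rw [mul_comm, coeff_C_mul, co, co, mul_one] at h2
    rw [h2, C_1, mul_one] at hu
    apply hab
    simp only [Finset.coe_range] at ha hb
    exact Function.iterate_injOn_Iio_minimalPeriod ha hb hu
  have hHd : ∏ s ∈ Finset.range n, hs s ∣ G :=
    Finset.prod_dvd_of_isRelPrime rel (fun s _ => dv s)
  set H := ∏ s ∈ Finset.range n, hs s with hH
  have hH0 : H ≠ 0 := Finset.prod_ne_zero_iff.2 fun s _ => (irr s).ne_zero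
  have hHF : Frob K H = H := by
    rw [hH, map_prod]
    simp only [hsucc]
    apply mul_right_cancel₀ (irr 0).ne_zero
    rw [← Finset.prod_range_succ', Finset.prod_range_succ, hper]
  obtain ⟨k, hk⟩ := hHd
  have hkF : Frob K k = k := by
    apply mul_left_cancel₀ hH0
    rw [← hk]
    conv_lhs => rw [← hHF]
    rw [← map_mul, ← hk, hG, Frob_map]
  obtain ⟨H0, eH⟩ := Frob_fixed hHF
  obtain ⟨k0, ek⟩ := Frob_fixed hkF
  have hgk : g = H0 * k0 := by
    apply hinj
    rw [map_mul, eH, ek, ← hG, hk]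
  have hku : IsUnit k := by
    rcases hg.isUnit_or_isUnit hgk with h2 | h2
    · exfalso
      have h3 : IsUnit H := by rw [← eH]; exact h2.map _
      have h4 : hs 0 ∣ H := Finset.dvd_prod_of_mem _ (Finset.mem_range.2 hn0)
      exact (irr 0).not_isUnit (isUnit_of_dvd_unit h4 h3)
    · rw [← ek]; exact h2.map _
  rcases Nat.lt_or_ge n 2 with h2 | h2
  · left
    have e1 : n = 1 := by omega
    have : H = hs 0 := by rw [hH, e1]; simp
    rw [hk, this, irreducible_mul_isUnit hku]
    exact irr 0
  · right
    obtain ⟨c, hc, e⟩ := hunit k hku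
    choose A hA using fun s : ℕ => TopF.exists (irr s).ne_zero
    refine ⟨n, h.totalDegree, fun s => hs s, fun s => A s, c, h2, hc, ?_, ?_⟩
    · rw [← e, hk, hH, Finset.prod_range]
    · intro s
      have := hA s
      rwa [Frob_iter_deg] at this

end Orbit

lemma TopF.prod {K : Type*} [Field K] {ι : Type*} (s : Finset ι) (p T : ι → MvPolynomial (Fin 2) K)
    (d : ℕ) (h : ∀ j ∈ s, TopF (p j) d (T j)) :
    TopF (∏ j ∈ s, p j) (s.card * d) (∏ j ∈ s, T j) := by
  classical
  induction s using Finset.induction_on with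
  | empty =>
    simp only [Finset.prod_empty, Finset.card_empty, zero_mul]
    exact ⟨isHomogeneous_one _ _, one_ne_zero, by simp⟩
  | insert a s ha ih =>
    rw [Finset.prod_insert ha, Finset.prod_insert ha, Finset.card_insert_of_notMem ha, add_mul, one_mul, add_comm]
    exact (h a (Finset.mem_insert_self a s)).mul (ih fun j hj => h j (Finset.mem_insert_of_mem hj))

lemma TopF.X_add_one {K : Type*} [Field K] [CharP K 2] (j : Fin 2) : TopF (X j + 1 : MvPolynomial (Fin 2) K) 1 (X j) :=
  ⟨isHomogeneous_X K j, X_ne_zero j, by simpa using one_mem_VV (K := K)⟩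


theorem stmt_16 (i l t : ℕ) (hi : 1 ≤ i) (hl : 3 ≤ l) (hlodd : Odd l)
    (ht : t = 2 ^ i * l + 1) (hdvd : l ∣ 2 ^ i - 1) (hne : l ≠ 2 ^ i - 1)
    (g : MvPolynomial (Fin 2) (ZMod 2))
    (hg : (X 0 + 1) * (X 1 + 1) * (X 0 + X 1) * g =
      X 0 ^ t + X 1 ^ t + 1 + (X 0 + X 1 + 1) ^ t)
    (hirr : Irreducible g) :
    Irreducible (MvPolynomial.map (algebraMap (ZMod 2) (AlgebraicClosure (ZMod 2))) g) := by
  haveI : CharP (AlgebraicClosure (ZMod 2)) 2 := charP_of_injective_algebraMap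
    (algebraMap (ZMod 2) (AlgebraicClosure (ZMod 2))).injective 2
  rcases orbit (K := AlgebraicClosure (ZMod 2)) g hirr with h | ⟨r, d, h, A, c, hr, hc, hprod, htop⟩
  · exact h
  exfalso
  subst ht
  have hpos : 0 < 2 ^ i := by positivity
  have heven : Even (2 ^ i) := Nat.even_pow.2 ⟨even_two, by omega⟩
  have hq : 3 * l + 1 ≤ 2 ^ i := by
    obtain ⟨m, hm⟩ := hdvd
    have hodd : Odd (l * m) := by
      rw [← hm]
      exact Nat.Even.sub_odd (by omega) heven odd_one
    have hm_odd : Odd m := (Nat.odd_mul.1 hodd).2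
    have m1 : m ≠ 1 := by
      rintro rfl
      apply hne; rw [hm, mul_one]
    have m3 : 3 ≤ m := by
      obtain ⟨a, rfl⟩ := hm_odd
      omega
    have : l * 3 ≤ l * m := Nat.mul_le_mul_left l m3
    omega
  have hG := congrArg (MvPolynomial.map (algebraMap (ZMod 2) (AlgebraicClosure (ZMod 2)))) hg
  simp only [map_mul, map_add, map_pow, map_one, map_X] at hG
  have e : (∏ s, h s) * (C c * ((X 0 + 1) * (X 1 + 1) * (X 0 + X 1))) =
      ff (AlgebraicClosure (ZMod 2)) (2 ^ i * l + 1) := by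
    rw [ff, ← hG, ← hprod]; ring
  have hL0 : (X 0 + X 1 : MvPolynomial (Fin 2) (AlgebraicClosure (ZMod 2))) ≠ 0 := by
    intro h0
    have := congrArg (eval ![1, 0]) h0
    simp at this
  have t1 : TopF (C c : MvPolynomial (Fin 2) (AlgebraicClosure (ZMod 2))) 0 (C c) :=
    ⟨isHomogeneous_C _ _, by simpa using hc, by simp⟩
  have t2 : TopF (X 0 + X 1 : MvPolynomial (Fin 2) (AlgebraicClosure (ZMod 2))) 1 (X 0 + X 1) :=
    ⟨hL, hL0, by simp⟩
  have t3 := (TopF.prod Finset.univ h A d (fun s _ => htop s)).mul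
    (t1.mul (((TopF.X_add_one 0).mul (TopF.X_add_one 1)).mul t2))
  rw [e] at t3
  have hev : Even (2 ^ i * l) := heven.mul_right l
  have hd := (t3.unique (ff_top hev (by nlinarith))).1
  rw [Finset.card_univ, Fintype.card_fin] at hd
  exact no_split i l hi hl hlodd hdvd hq r d hr h A _ e htop (by omega)
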